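/- arXiv:1002.1519 — 9 statements merged into one kernel-verified Lean document; each statement's English description precedes it below -/
import Mathlib

section
/- For all positive integers n and r, r^(n-1) = Σ (n! / (k₀!·k₁!⋯k_{r-1}!)), where the sum ranges over all tuples (k₀, …, k_{r-1}) of nonnegative integers of length r such that k₀ + k₁ + ⋯ + k_{r-1} = n and r divides Σ_{i=0}^{r-1} i·k_i. -/
/-!
In the group semiring `ℕ[ℤ/r]`, let `S` be the sum of all group elements. Multiplication by a
group element permutes the summands, so `S * S = r • S` and `S ^ n = r ^ (n - 1) • S`, whose
coefficient at `0` is `r ^ (n - 1)`. Expanding `S ^ n` by the multinomial theorem instead, the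
tuple `k` contributes its multinomial coefficient at the group element `∑ i * kᵢ mod r`, so the
coefficient at `0` is the sum over the tuples with `r ∣ ∑ i * kᵢ`.
-/

/-- The sum of all elements of `ℤ/r` in its group semiring, indexed by residues in `Fin r`. -/
noncomputable def groupSum (r : ℕ) : AddMonoidAlgebra ℕ (ZMod r) :=
  ∑ i : Fin r, AddMonoidAlgebra.single ((i : ℕ) : ZMod r) 1

theorem groupSum_eq (r : ℕ) [NeZero r] :
    groupSum r = ∑ g : ZMod r, AddMonoidAlgebra.single g 1 := by
  obtain ⟨m, rfl⟩ := Nat.exists_eq_succ_of_ne_zero (NeZero.ne r)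
  refine Finset.sum_congr rfl fun i _ => ?_
  congr 1
  exact Fin.cast_val_eq_self i

theorem single_mul_groupSum (r : ℕ) [NeZero r] (h : ZMod r) :
    AddMonoidAlgebra.single h 1 * groupSum r = groupSum r := by
  rw [groupSum_eq, Finset.mul_sum]
  simp only [AddMonoidAlgebra.single_mul_single, mul_one]
  exact Equiv.sum_comp (Equiv.addLeft h) fun g => AddMonoidAlgebra.single g (1 : ℕ)

theorem groupSum_pow_succ (r : ℕ) [NeZero r] (m : ℕ) :
    groupSum r ^ (m + 1) = r ^ m • groupSum r := by
  induction m with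
  | zero => simp
  | succ m ih =>
    have hsq : groupSum r * groupSum r = r • groupSum r := by
      conv_lhs => enter [1]; unfold groupSum
      simp [Finset.sum_mul, single_mul_groupSum]
    rw [pow_succ, ih, smul_mul_assoc, hsq, smul_smul, pow_succ]

theorem groupSum_coeff_zero (r : ℕ) [NeZero r] : (groupSum r).coeff 0 = 1 := by
  rw [groupSum_eq]
  simp [AddMonoidAlgebra.coeff_sum, Finsupp.finsetSum_apply, Finsupp.single_apply]

theorem groupSum_pow_coeff_zero (r n : ℕ) :
    (groupSum r ^ n).coeff 0 =
      ∑ k ∈ (Finset.Nat.antidiagonalTuple r n).filter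
          (fun k => r ∣ ∑ i : Fin r, (i : ℕ) * k i),
        Nat.multinomial Finset.univ k := by
  have hset : Finset.piAntidiag (Finset.univ : Finset (Fin r)) n =
      Finset.Nat.antidiagonalTuple r n := by
    ext k
    simp [Finset.Nat.mem_antidiagonalTuple]
  have hprod (k : Fin r → ℕ) :
      ∏ i : Fin r, (AddMonoidAlgebra.single ((i : ℕ) : ZMod r) (1 : ℕ)) ^ k i =
        AddMonoidAlgebra.single ((∑ i : Fin r, (i : ℕ) * k i : ℕ) : ZMod r) 1 := by
    simp only [AddMonoidAlgebra.single_pow, one_pow]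
    rw [AddMonoidAlgebra.prod_single]
    simp [mul_comm]
  unfold groupSum
  rw [Finset.sum_pow_eq_sum_piAntidiag, hset, Finset.sum_filter]
  simp only [hprod, ← nsmul_eq_mul]
  simp [AddMonoidAlgebra.coeff_sum, Finsupp.finsetSum_apply, Finsupp.single_apply,
    ← ZMod.natCast_eq_zero_iff]

/-- For all positive integers `n` and `r`,
`r ^ (n-1) = ∑ n! / (k₀! ⋯ k_{r-1}!)`, the sum ranging over all tuples
`(k₀, …, k_{r-1})` of nonnegative integers with `k₀ + ⋯ + k_{r-1} = n` and
`r ∣ ∑ i * kᵢ`. -/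
theorem pow_eq_sum_multinomial (n r : ℕ) (hn : 0 < n) (hr : 0 < r) :
    r ^ (n - 1) =
      ∑ k ∈ (Finset.Nat.antidiagonalTuple r n).filter
          (fun k => r ∣ ∑ i : Fin r, (i : ℕ) * k i),
        n.factorial / ∏ i : Fin r, (k i).factorial := by
  have : NeZero r := ⟨hr.ne'⟩
  obtain ⟨m, rfl⟩ := Nat.exists_eq_succ_of_ne_zero hn.ne'
  have h := groupSum_pow_coeff_zero r (m + 1)
  rw [groupSum_pow_succ] at h
  simp only [AddMonoidAlgebra.coeff_smul, Finsupp.smul_apply, groupSum_coeff_zero, smul_eq_mul,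
    mul_one] at h
  rw [Nat.succ_eq_add_one, Nat.add_sub_cancel, h]
  refine Finset.sum_congr rfl fun k hk => ?_
  rw [Nat.multinomial, Finset.Nat.mem_antidiagonalTuple.1 (Finset.mem_filter.1 hk).1]
end

section
/- For every positive integer n, Σ_{k ∈ D(n)} (n! / (k₀!·k₁!⋯k_n!)) = (n+1)^(n-1), where D(n) is the set of tuples (k₀, …, k_n) of nonnegative integers of length n+1 with k₀ + ⋯ + k_n = n and n+1 dividing Σ_{i=1}^{n} i·k_i. -/
/-!
The multinomial coefficients are read off in the group algebra `ℕ[ZMod (n + 1)]`. Let `S` be the sum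
of all group elements. By the multinomial theorem the coefficient of `S ^ n` at `0` is the sum of
the multinomial coefficients over the tuples `k` of total `n` with `∑ i * kᵢ ≡ 0` modulo `n + 1`.
On the other hand multiplication by a group element fixes `S`, so `S * S = (n + 1) • S` and
`S ^ n = (n + 1) ^ (n - 1) • S` for `n > 0`, whose coefficient at `0` is `(n + 1) ^ (n - 1)`.
-/

open AddMonoidAlgebra in
/-- The sum of all elements of a finite abelian group, in the group algebra, satisfies
`S ^ (m + 1) = |G| ^ m • S`. -/
lemma sum_single_pow {G : Type*} [AddCommGroup G] [Fintype G] (m : ℕ) :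
    (∑ g : G, single g (1 : ℕ)) ^ (m + 1) =
      (Fintype.card G ^ m) • ∑ g : G, single g (1 : ℕ) := by
  have absorb (h : G) :
      single h (1 : ℕ) * ∑ g : G, single g (1 : ℕ) = ∑ g : G, single g (1 : ℕ) := by
    simp only [Finset.mul_sum, single_mul_single, mul_one]
    exact Equiv.sum_comp (Equiv.addLeft h) (fun g => single g (1 : ℕ))
  induction m with
  | zero => simp
  | succ m ih =>
    rw [pow_succ, ih, smul_mul_assoc, Finset.sum_mul]
    simp only [absorb, Finset.sum_const, Finset.card_univ, smul_smul, pow_succ]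

open AddMonoidAlgebra in
/-- For every positive integer `n`,
`∑_{k ∈ D(n)} n!/(k₀!⋯k_n!) = (n+1)^(n-1)`, where `D(n)` is the set of tuples
`(k₀, …, k_n)` of nonnegative integers with `k₀ + ⋯ + k_n = n` and
`(n+1) ∣ ∑ i * kᵢ`. -/
theorem sum_multinomial_eq_parking (n : ℕ) (hn : 0 < n) :
    ∑ k ∈ (Finset.Nat.antidiagonalTuple (n + 1) n).filter
        (fun k => (n + 1) ∣ ∑ i : Fin (n + 1), (i : ℕ) * k i),
      n.factorial / ∏ i : Fin (n + 1), (k i).factorial = (n + 1) ^ (n - 1) := by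
  -- `ZMod (n + 1)` unfolds to `Fin (n + 1)`, so the group elements are exactly the casts of indices.
  have hS : ∑ i : Fin (n + 1), single ((i : ℕ) : ZMod (n + 1)) (1 : ℕ) =
      ∑ g : ZMod (n + 1), single g (1 : ℕ) :=
    Finset.sum_congr rfl fun i _ => congrArg (single · 1) (ZMod.natCast_zmod_val (n := n + 1) i)
  have hpow := Finset.sum_pow_eq_sum_piAntidiag Finset.univ
    (fun i : Fin (n + 1) => single ((i : ℕ) : ZMod (n + 1)) (1 : ℕ)) n
  obtain ⟨m, rfl⟩ : ∃ m, n = m + 1 := ⟨n - 1, by omega⟩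
  rw [hS, sum_single_pow, Finset.piAntidiag_univ_fin_eq_antidiagonalTuple, ZMod.card] at hpow
  have hcoeff := congrArg (fun x => x.coeff 0) hpow
  simp only [single_pow, prod_single, one_pow, Finset.prod_const_one, ← nsmul_eq_mul, coeff_sum,
    coeff_smul, coeff_single, Finsupp.coe_finsetSum, Finset.sum_apply, Finsupp.smul_apply,
    Finsupp.single_apply, Finset.sum_ite_eq', Finset.mem_univ, if_true, smul_eq_mul,
    mul_one, mul_ite, mul_zero] at hcoeff
  rw [Nat.add_sub_cancel, hcoeff, Finset.sum_filter]
  refine Finset.sum_congr rfl fun k hk => ?_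
  rw [Finset.Nat.mem_antidiagonalTuple] at hk
  refine if_congr ?_ (by rw [Nat.multinomial, hk]) rfl
  rw [← ZMod.natCast_eq_zero_iff]
  simp [mul_comm]
end

section
/- For every positive integer n, the number of tuples (k₀, …, k_n) of nonnegative integers of length n+1 such that k₀ + ⋯ + k_n = n and n+1 divides Σ_{i=1}^{n} i·k_i equals the n-th Catalan number C_n = (1/(n+1))·binomial(2n, n). -/
/-!
There are `(2n).choose n` tuples `k` of length `n + 1` with sum `n`. Their weight
`∑ i, i * k i`, read in `ZMod (n + 1)`, changes by `-c * n = c` when the tuple is rotated by `c`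
(`weight_rotate`), so rotation identifies the tuples of weight `0` with those of weight `c`.
All `n + 1` residues are therefore hit equally often, and the residue `0` accounts for
a fraction `1 / (n + 1)` of the tuples.
-/

/-- The weight `∑ i, i * k i` of a tuple modulo `n + 1`. Tuples are indexed by `ZMod (n + 1)`, which
is definitionally `Fin (n + 1)`, so that indices can be translated cyclically. -/
def weight (n : ℕ) (k : ZMod (n + 1) → ℕ) : ZMod (n + 1) := ∑ i, i * (k i : ZMod (n + 1))

lemma weight_rotate (n : ℕ) (k : ZMod (n + 1) → ℕ) (hk : ∑ i, k i = n) (c : ZMod (n + 1)) :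
    weight n (fun i => k (i + c)) = weight n k + c := by
  have h1 : weight n (fun i => k (i + c)) = ∑ j, (j - c) * (k j : ZMod (n + 1)) := by
    unfold weight
    rw [← Equiv.sum_comp (Equiv.addRight c) (fun j => (j - c) * (k j : ZMod (n + 1)))]
    simp
  have h2 : (∑ i, (k i : ZMod (n + 1))) = -1 := by
    rw [← Nat.cast_sum, hk, eq_neg_iff_add_eq_zero]
    exact_mod_cast ZMod.natCast_self (n + 1)
  rw [h1]
  simp only [sub_mul, Finset.sum_sub_distrib, ← Finset.mul_sum, h2]
  unfold weight
  ring

lemma dvd_iff_weight_eq_zero (n : ℕ) (k : Fin (n + 1) → ℕ) :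
    (n + 1) ∣ ∑ i : Fin (n + 1), (i : ℕ) * k i ↔ weight n k = 0 := by
  rw [← ZMod.natCast_eq_zero_iff, Nat.cast_sum]
  have h : ∀ i : Fin (n + 1), (((i : ℕ) * k i : ℕ) : ZMod (n + 1)) =
      (show ZMod (n + 1) from i) * (k i : ZMod (n + 1)) := fun i => by
    rw [Nat.cast_mul]
    congr 1
    exact ZMod.natCast_zmod_val (n := n + 1) i
  rw [Finset.sum_congr rfl fun i _ => h i]
  rfl

lemma card_antidiagonalTuple_succ (n : ℕ) :
    (Finset.Nat.antidiagonalTuple (n + 1) n).card = (2 * n).choose n := by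
  have h : (Finset.Nat.antidiagonalTuple (n + 1) n).card =
      ((Finset.univ : Finset (Fin (n + 1))).finsuppAntidiag n).card :=
    Finset.card_equiv Finsupp.equivFunOnFinite.symm fun k => by
      simp [Finset.Nat.mem_antidiagonalTuple, Finset.mem_finsuppAntidiag]
  rw [h, Finset.card_finsuppAntidiag_nat_eq_choose, Finset.card_univ, Fintype.card_fin]
  congr 1
  omega

/-- For every positive integer `n`, the number of tuples `(k₀, …, k_n)` of
nonnegative integers with `k₀ + ⋯ + k_n = n` and `(n+1) ∣ ∑ i * kᵢ` equals the
`n`-th Catalan number `(1/(n+1)) * binomial (2n) n`. -/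
theorem card_D_eq_catalan (n : ℕ) (hn : 0 < n) :
    ((Finset.Nat.antidiagonalTuple (n + 1) n).filter
        (fun k => (n + 1) ∣ ∑ i : Fin (n + 1), (i : ℕ) * k i)).card =
      (2 * n).choose n / (n + 1) := by
  obtain ⟨S, hS⟩ : ∃ S : Finset (ZMod (n + 1) → ℕ),
      S = Finset.Nat.antidiagonalTuple (n + 1) n := ⟨_, rfl⟩
  have hmem : ∀ k, k ∈ S ↔ ∑ i, k i = n := fun k => by
    rw [hS]; exact Finset.Nat.mem_antidiagonalTuple
  have hcard : S.card = (2 * n).choose n := by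
    rw [hS]; exact card_antidiagonalTuple_succ n
  have hrot : ∀ k ∈ S, ∀ c, (fun i => k (i + c)) ∈ S := fun k hk c => by
    rw [hmem] at hk ⊢
    exact (Equiv.sum_comp (Equiv.addRight c) k).trans hk
  have hfib : ∀ c : ZMod (n + 1), (S.filter fun k => weight n k = c).card =
      (S.filter fun k => weight n k = 0).card := fun c => by
    refine Finset.card_bij' (fun k _ i => k (i + -c)) (fun k _ i => k (i + c)) ?_ ?_ ?_ ?_
    · intro k hk
      rw [Finset.mem_filter] at hk ⊢
      exact ⟨hrot k hk.1 _, by rw [weight_rotate n k ((hmem k).1 hk.1), hk.2, add_neg_cancel]⟩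
    · intro k hk
      rw [Finset.mem_filter] at hk ⊢
      exact ⟨hrot k hk.1 _, by rw [weight_rotate n k ((hmem k).1 hk.1), hk.2, zero_add]⟩
    · intro k _
      simp
    · intro k _
      simp
  have hsum := Finset.card_eq_sum_card_fiberwise (f := weight n) (s := S) (t := Finset.univ)
    (fun _ _ => Finset.mem_coe.2 (Finset.mem_univ _))
  rw [Finset.sum_congr rfl fun c _ => hfib c, Finset.sum_const, Finset.card_univ, ZMod.card,
    smul_eq_mul, hcard] at hsum
  rw [hsum, Nat.mul_div_cancel_left _ n.succ_pos]
  have hzero : ∀ k, k ∈ S.filter (fun k => weight n k = 0) ↔ k ∈ S ∧ weight n k = 0 :=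
    fun k => Finset.mem_filter
  subst hS
  congr 1
  ext k
  rw [Finset.mem_filter]
  exact (and_congr_right fun _ => dvd_iff_weight_eq_zero n k).trans (hzero k).symm
end

section
/- For every positive integer n, the number of parking functions of length n equals (n+1)^(n-1). -/
/-!
Pollak's circular argument. Put one extra spot on the street and bend it into a circle, so that
preferences become functions `f : Fin n → Fin (n + 1)`. There are `(n + 1) ^ n` of them, and
`Fin (n + 1)` acts by rotation `f ↦ f - c`. Exactly one rotation of each `f` is a parking function
(`existsUnique_rotation`), hence the number of parking functions is `(n + 1) ^ n / (n + 1)`.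

For the unique rotation, let `H m = #{i | f i < m} - m` for `0 ≤ m ≤ n`. Rotating by `c` gives a
parking function if and only if `H c ≤ H m` for `c ≤ m` and `H c < H m` for `m < c`, i.e. if and
only if `c` is the first point at which `H` attains its minimum (`circPark_sub_iff`).
-/

/-- `a : Fin n → ℕ` is a parking function of length `n` if `1 ≤ a i ≤ n` for all
`i` and, for every `1 ≤ j ≤ n`, at least `j` of the entries are `≤ j`. -/
def IsParkingFunction (n : ℕ) (a : Fin n → ℕ) : Prop :=
  (∀ i, 1 ≤ a i ∧ a i ≤ n) ∧
    ∀ j, 1 ≤ j → j ≤ n → j ≤ (Finset.univ.filter (fun i => a i ≤ j)).card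

/-- The parking condition for preferences on a circle with spots `0, …, n`: for every `j ≤ n`
at least `j` cars prefer one of the spots `0, …, j - 1`. The case `j = n` forces the extra
spot `n` to be avoided, and spot `k` corresponds to the value `k + 1` of a parking function. -/
def CircPark (n : ℕ) (g : Fin n → Fin (n + 1)) : Prop :=
  ∀ j, j ≤ n → j ≤ (Finset.univ.filter (fun i => (g i).val < j)).card

/-- The number of cars preferring one of the spots `0, …, m - 1`. -/
def cumCount {n : ℕ} (f : Fin n → Fin (n + 1)) (m : ℕ) : ℕ :=
  (Finset.univ.filter (fun i => (f i).val < m)).card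

lemma val_sub_eq {n : ℕ} (x c : Fin (n + 1)) :
    (x - c).val = if c.val ≤ x.val then x.val - c.val else n + 1 + x.val - c.val := by
  split_ifs with h
  · exact Fin.sub_val_of_le h
  · rw [Fin.coe_sub_iff_lt.2 (by simpa using h)]

/-- The rotated count over an arc that does not pass the spot `n`. -/
lemma cumCount_sub_of_le {n : ℕ} (f : Fin n → Fin (n + 1)) (c : Fin (n + 1)) (j : ℕ)
    (h : c.val + j ≤ n + 1) :
    cumCount f c.val + cumCount (fun i => f i - c) j = cumCount f (c.val + j) := by
  unfold cumCount
  rw [← Finset.card_union_of_disjoint]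
  · congr 1
    ext i
    have := (f i).isLt
    simp only [Finset.mem_union, Finset.mem_filter, Finset.mem_univ, true_and, val_sub_eq]
    split_ifs <;> omega
  · rw [Finset.disjoint_filter]
    intro i _ hi
    rw [val_sub_eq]
    split_ifs <;> omega

/-- The rotated count over an arc that wraps around and ends before the spot `m < c`: the arc
misses exactly the spots in `[m, c)`. -/
lemma cumCount_sub_of_wrap {n : ℕ} (f : Fin n → Fin (n + 1)) (c : Fin (n + 1)) (m : ℕ)
    (h : m < c.val) :
    cumCount f c.val + cumCount (fun i => f i - c) (n + 1 + m - c.val) = n + cumCount f m := by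
  unfold cumCount
  rw [← Finset.card_union_add_card_inter]
  congr 1
  · rw [Finset.filter_union_right, Finset.filter_true_of_mem, Finset.card_univ, Fintype.card_fin]
    intro i _
    have := (f i).isLt
    rw [val_sub_eq]
    split_ifs <;> omega
  · congr 1
    ext i
    have := (f i).isLt
    simp only [Finset.mem_inter, Finset.mem_filter, Finset.mem_univ, true_and, val_sub_eq]
    split_ifs <;> omega

/-- A rotation by `c` gives a parking function exactly when `c` is the first minimiser of
`m ↦ cumCount f m - m`; the inequalities are written without subtraction. -/
lemma circPark_sub_iff {n : ℕ} (f : Fin n → Fin (n + 1)) (c : Fin (n + 1)) :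
    CircPark n (fun i => f i - c) ↔
      ∀ m : Fin (n + 1), (c ≤ m → cumCount f c + m ≤ cumCount f m + c) ∧
        (m < c → cumCount f c + m < cumCount f m + c) := by
  constructor
  · intro h m
    have hm := m.isLt
    constructor
    · intro hcm
      have hcm' : c.val ≤ m.val := hcm
      have h1 := cumCount_sub_of_le f c (m - c) (by omega)
      have h2 : m.val - c.val ≤ cumCount (fun i => f i - c) (m - c) := h _ (by omega)
      rw [Nat.add_sub_cancel' hcm'] at h1
      omega
    · intro hmc
      have hmc' : m.val < c.val := hmc
      have h1 := cumCount_sub_of_wrap f c m hmc'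
      have h2 : n + 1 + m.val - c.val ≤ cumCount (fun i => f i - c) (n + 1 + m - c) :=
        h _ (by omega)
      omega
  · intro h j hj
    change j ≤ cumCount (fun i => f i - c) j
    by_cases hcj : c.val + j ≤ n
    · have h1 := cumCount_sub_of_le f c j (by omega)
      have h2 := (h ⟨c + j, by omega⟩).1 (by simp [Fin.le_def])
      simp only at h2
      omega
    · have hlt : c.val + j - (n + 1) < c.val := by omega
      have h1 := cumCount_sub_of_wrap f c (c + j - (n + 1)) hlt
      have h2 := (h ⟨c + j - (n + 1), by omega⟩).2 hlt
      rw [show n + 1 + (c.val + j - (n + 1)) - c.val = j by omega] at h1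
      simp only at h2
      omega

lemma existsUnique_rotation {n : ℕ} (f : Fin n → Fin (n + 1)) :
    ∃! c : Fin (n + 1), CircPark n (fun i => f i - c) := by
  simp only [circPark_sub_iff]
  refine existsUnique_of_exists_of_unique ?_ ?_
  · -- Minimising lexicographically in `(H m, m)` selects the first minimiser of `H`.
    obtain ⟨c, hc⟩ := Finite.exists_min
      (fun m : Fin (n + 1) => toLex ((cumCount f m : ℤ) - (m.val : ℤ), m.val))
    refine ⟨c, fun m => ?_⟩
    have h := hc m
    rw [Prod.Lex.toLex_le_toLex] at h
    simp only [Fin.le_def, Fin.lt_def]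
    omega
  · intro c d hc hd
    rcases lt_trichotomy c d with h | h | h
    · have h1 := (hc d).1 h.le
      have h2 := (hd c).2 h
      omega
    · exact h
    · have h1 := (hd c).1 h.le
      have h2 := (hc d).2 h
      omega

/-- Every circular preference function is a parking function rotated by a unique amount. -/
lemma rotation_bijective (n : ℕ) :
    Function.Bijective (fun p : {g : Fin n → Fin (n + 1) // CircPark n g} × Fin (n + 1) =>
      fun i => p.1.1 i + p.2) := by
  constructor
  · rintro ⟨⟨g, hg⟩, c⟩ ⟨⟨g', hg'⟩, c'⟩ h
    simp only at h
    have hc : c = c' := by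
      refine (existsUnique_rotation (fun i => g i + c)).unique ?_ ?_
      · simpa using hg
      · have hi : ∀ i, g i + c = g' i + c' := congrFun h
        simpa [hi] using hg'
    subst hc
    have hgg : g = g' := funext fun i => add_right_cancel (congrFun h i)
    subst hgg
    rfl
  · intro f
    obtain ⟨c, hc, -⟩ := existsUnique_rotation f
    exact ⟨⟨⟨_, hc⟩, c⟩, by simp⟩

lemma CircPark.val_lt {n : ℕ} {g : Fin n → Fin (n + 1)} (hg : CircPark n g) (i : Fin n) :
    (g i).val < n := by
  have h : Finset.univ.filter (fun i => (g i).val < n) = Finset.univ :=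
    Finset.eq_univ_of_card _ (le_antisymm (Finset.card_le_univ _) (by simpa using hg n le_rfl))
  simpa using Finset.eq_univ_iff_forall.1 h i

/-- Spots on the circle are numbered from `0`, values of parking functions from `1`. -/
def circParkEquiv (n : ℕ) :
    {g : Fin n → Fin (n + 1) // CircPark n g} ≃ {a : Fin n → ℕ // IsParkingFunction n a} where
  toFun g := ⟨fun i => (g.1 i).val + 1,
    fun i => ⟨Nat.le_add_left _ _, g.2.val_lt i⟩, fun j _ hj => g.2 j hj⟩
  invFun a := ⟨fun i => ⟨a.1 i - 1, by have := a.2.1 i; omega⟩, fun j hj => by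
    rcases Nat.eq_zero_or_pos j with rfl | h0
    · exact Nat.zero_le _
    · refine (a.2.2 j h0 hj).trans (Finset.card_le_card fun i hi => ?_)
      have := a.2.1 i
      simp only [Finset.mem_filter, Finset.mem_univ, true_and] at hi ⊢
      omega⟩
  left_inv g := by
    ext i
    simp
  right_inv a := by
    ext i
    have := a.2.1 i
    simp only
    omega

/-- The number of parking functions of length `n` is `(n+1)^(n-1)`. -/
theorem card_parkingFunctions (n : ℕ) (hn : 0 < n) :
    Nat.card {a : Fin n → ℕ // IsParkingFunction n a} = (n + 1) ^ (n - 1) := by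
  rw [← Nat.card_congr (circParkEquiv n)]
  have h := Nat.card_congr (Equiv.ofBijective _ (rotation_bijective n))
  rw [Nat.card_prod, Nat.card_fun, Nat.card_fin, Nat.card_fin] at h
  apply Nat.eq_of_mul_eq_mul_right (Nat.succ_pos n)
  rw [Nat.succ_eq_add_one, h, ← pow_succ, Nat.sub_add_cancel hn]
end

section
/- For every positive integer n, the map sending a parking function a = (a₁, …, a_n) of length n to the coset of (a₁ − 1 mod n+1, …, a_n − 1 mod n+1) in the quotient group (ℤ_{n+1})^n / Δ, where Δ = {(g, …, g) : g ∈ ℤ_{n+1}} is the diagonal subgroup, is a bijection from the set of parking functions of length n onto (ℤ_{n+1})^n / Δ. -/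
/-- The diagonal subgroup `Δ = {(g, …, g) : g ∈ ℤ_{n+1}}` of `(ℤ_{n+1})^n`. -/
def diagonal (n r : ℕ) : AddSubgroup (Fin n → ZMod r) where
  carrier := {g | ∃ c : ZMod r, g = fun _ => c}
  zero_mem' := ⟨0, rfl⟩
  add_mem' := by
    rintro a b ⟨c, rfl⟩ ⟨d, rfl⟩
    exact ⟨c + d, rfl⟩
  neg_mem' := by
    rintro a ⟨c, rfl⟩
    exact ⟨-c, rfl⟩

/-- A parking function shifted to start at `0` and read modulo `n + 1`. The case `j = n` excludes
the residue `n`. -/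
def IsParkingTuple (n : ℕ) (y : Fin n → ZMod (n + 1)) : Prop :=
  ∀ j, j ≤ n → j ≤ (Finset.univ.filter (fun i => (y i).val < j)).card

lemma zmod_val_sub_cases {n : ℕ} (u d : ZMod (n + 1)) :
    (d.val ≤ u.val ∧ (u - d).val = u.val - d.val) ∨
      (u.val < d.val ∧ (u - d).val = u.val + (n + 1) - d.val) := by
  rcases le_or_gt d.val u.val with h | h
  · exact Or.inl ⟨h, ZMod.val_sub h⟩
  · refine Or.inr ⟨h, ?_⟩
    have h1 : (d - u).val = d.val - u.val := ZMod.val_sub h.le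
    have h2 : d - u ≠ 0 := by
      intro h0
      rw [h0, ZMod.val_zero] at h1
      omega
    have := ZMod.val_lt d
    rw [← neg_sub d u, ZMod.neg_val, if_neg h2, h1]
    omega

lemma IsParkingTuple.val_lt {n : ℕ} {y : Fin n → ZMod (n + 1)} (hy : IsParkingTuple n y)
    (i : Fin n) : (y i).val < n := by
  have h := hy n le_rfl
  have h' : Finset.univ.filter (fun i => (y i).val < n) = Finset.univ :=
    Finset.eq_univ_of_card _ (le_antisymm (Finset.card_le_univ _) (by simpa using h))
  simpa using Finset.ext_iff.1 h' i

lemma IsParkingTuple.shift_eq_zero {n : ℕ} {y : Fin n → ZMod (n + 1)} (hy : IsParkingTuple n y)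
    {d : ZMod (n + 1)} (hd : IsParkingTuple n (fun i => y i - d)) : d = 0 := by
  by_contra hne
  have hpos : d.val ≠ 0 := fun h => hne ((ZMod.val_eq_zero d).1 h)
  have hlt := ZMod.val_lt d
  have h1 := hy d.val (by omega)
  have h2 := hd (n + 1 - d.val) (by omega)
  beta_reduce at h2
  have h3 : (Finset.univ.filter (fun i => (y i - d).val < n + 1 - d.val)).card ≤
      (Finset.univ.filter (fun i => ¬ (y i).val < d.val)).card := by
    refine Finset.card_le_card fun i => ?_
    simp only [Finset.mem_filter, Finset.mem_univ, true_and]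
    have := zmod_val_sub_cases (y i) d
    omega
  have h4 := Finset.card_filter_add_card_filter_not (s := Finset.univ)
    (fun i => (y i).val < d.val)
  rw [Finset.card_univ, Fintype.card_fin] at h4
  omega

lemma exists_shift_isParkingTuple {n : ℕ} (x : Fin n → ZMod (n + 1)) :
    ∃ d : ZMod (n + 1), IsParkingTuple n (fun i => x i - d) := by
  let N : ℕ → ℕ := fun k => (Finset.univ.filter (fun i => (x i).val < k)).card
  obtain ⟨c, hc, hmin⟩ := Finset.exists_min_image (Finset.range (n + 1))
    (fun k => ((n : ℤ) + 1) * N k - n * k) ⟨0, by simp⟩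
  rw [Finset.mem_range] at hc
  have hcv : ((c : ℕ) : ZMod (n + 1)).val = c := ZMod.val_cast_of_lt hc
  refine ⟨(c : ZMod (n + 1)), fun j hj => ?_⟩
  set m := (Finset.univ.filter (fun i => (x i - (c : ZMod (n + 1))).val < j)).card with hm
  -- It suffices that the increment of the walk over `j` steps is nonnegative.
  suffices h : (n : ℤ) * j ≤ (n + 1) * m by
    by_contra hlt
    have h1 : (m : ℤ) + 1 ≤ j := by exact_mod_cast not_le.1 hlt
    have h2 : (j : ℤ) ≤ n := by exact_mod_cast hj
    nlinarith
  have hstep := fun i => zmod_val_sub_cases (x i) (c : ZMod (n + 1))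
  simp only [hcv] at hstep
  rcases Nat.lt_or_ge (c + j) (n + 1) with hcj | hcj
  · have hT := hmin (c + j) (by simpa using hcj)
    have hcard : N (c + j) ≤ N c + m := by
      refine le_trans (Finset.card_le_card fun i => ?_) (Finset.card_union_le _ _)
      simp only [Finset.mem_filter, Finset.mem_univ, true_and, Finset.mem_union]
      have := hstep i
      omega
    zify at hcard
    push_cast at hT
    nlinarith
  · obtain ⟨k, hk⟩ := Nat.exists_eq_add_of_le hcj
    have hT := hmin k (by rw [Finset.mem_range]; omega)
    -- Past the wrap-around, the window consists of the values `≥ c` and those `< k`.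
    have hcard : N k + n ≤ N c + m := by
      have h1 := Finset.card_filter_add_card_filter_not (s := Finset.univ)
        (fun i => (x i).val < c)
      rw [Finset.card_univ, Fintype.card_fin] at h1
      have h2 : N k + (Finset.univ.filter (fun i => ¬ (x i).val < c)).card ≤ m := by
        rw [← Finset.card_union_of_disjoint]
        · refine Finset.card_le_card fun i => ?_
          simp only [Finset.mem_filter, Finset.mem_univ, true_and, Finset.mem_union]
          have := hstep i
          have := ZMod.val_lt (x i)
          omega
        · rw [Finset.disjoint_left]
          intro i
          simp only [Finset.mem_filter, Finset.mem_univ, true_and]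
          omega
      change _ ≤ (Finset.univ.filter (fun i => (x i).val < c)).card + m
      omega
    zify at hcard hk
    have hj' : (j : ℤ) = n + 1 + k - c := by linarith
    rw [hj']
    nlinarith

lemma IsParkingFunction.val_cast {n : ℕ} {a : Fin n → ℕ} (ha : IsParkingFunction n a) (i : Fin n) :
    ((a i - 1 : ℕ) : ZMod (n + 1)).val = a i - 1 :=
  ZMod.val_cast_of_lt (by have := ha.1 i; omega)

lemma IsParkingFunction.isParkingTuple {n : ℕ} {a : Fin n → ℕ} (ha : IsParkingFunction n a) :
    IsParkingTuple n (fun i => ((a i - 1 : ℕ) : ZMod (n + 1))) := by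
  intro j hj
  rcases Nat.eq_zero_or_pos j with rfl | hpos
  · exact Nat.zero_le _
  refine (ha.2 j hpos hj).trans (Finset.card_le_card fun i => ?_)
  simp only [Finset.mem_filter, Finset.mem_univ, true_and, ha.val_cast]
  omega

lemma IsParkingTuple.isParkingFunction {n : ℕ} {y : Fin n → ZMod (n + 1)}
    (hy : IsParkingTuple n y) : IsParkingFunction n (fun i => (y i).val + 1) :=
  ⟨fun i => ⟨Nat.le_add_left _ _, hy.val_lt i⟩, fun j _ hj => hy j hj⟩

/-- Pollak's correspondence: the map sending a parking function
`a = (a₁, …, a_n)` of length `n` to the class of `(a₁ - 1, …, a_n - 1)` modulo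
`n+1` in the quotient group `(ℤ_{n+1})^n / Δ` is a bijection. -/
theorem parking_bijection (n : ℕ) (hn : 0 < n) :
    Function.Bijective
      (fun a : {a : Fin n → ℕ // IsParkingFunction n a} =>
        (QuotientAddGroup.mk (fun i => ((a.1 i - 1 : ℕ) : ZMod (n + 1))) :
          (Fin n → ZMod (n + 1)) ⧸ diagonal n (n + 1))) := by
  constructor
  · rintro ⟨a, ha⟩ ⟨b, hb⟩ hab
    obtain ⟨c, hc⟩ := QuotientAddGroup.eq.1 hab
    have hc' : ∀ i, ((b i - 1 : ℕ) : ZMod (n + 1)) = ((a i - 1 : ℕ) : ZMod (n + 1)) - -c := by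
      intro i
      have h := congrFun hc i
      simp only [Pi.add_apply, Pi.neg_apply] at h
      rw [← h]
      ring
    have hbt := hb.isParkingTuple
    simp only [hc'] at hbt
    have h0 := ha.isParkingTuple.shift_eq_zero hbt
    refine Subtype.ext (funext fun i => ?_)
    have h := congrArg ZMod.val (hc' i)
    rw [h0, sub_zero, ha.val_cast, hb.val_cast] at h
    have h1 := ha.1 i
    have h2 := hb.1 i
    change a i = b i
    omega
  · intro q
    obtain ⟨x, rfl⟩ := QuotientAddGroup.mk_surjective q
    obtain ⟨d, hd⟩ := exists_shift_isParkingTuple x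
    refine ⟨⟨_, hd.isParkingFunction⟩, QuotientAddGroup.eq.2 ⟨d, funext fun i => ?_⟩⟩
    simp
end

section
/- For every positive integer n, the number of nondecreasing integer sequences (b₁, …, b_n) with 1 ≤ b_i ≤ i for all i = 1, …, n equals the n-th Catalan number C_n = (1/(n+1))·binomial(2n, n). -/
/-!
Refine the count by a bound on the values: let `B n j` be the number of admissible sequences of
length `n` all of whose entries are at most `j + 1`. An admissible sequence of length `n + 1` with
entries at most `j + 2` either has all entries at most `j + 1`, or ends in `j + 2`; the latter
requires `j + 1 ≤ n`, and deleting the last entry then leaves an arbitrary sequence counted by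
`B n (j + 1)`. Hence `B (n + 1) (j + 1) = B (n + 1) j + B n (j + 1)` for `j + 1 ≤ n`, and
`B (n + 1) (n + 1) = B (n + 1) n` (`ncard_boundedSeqs_succ`, `boundedSeqs_diag`). By Pascal's rule
this is solved by the ballot numbers `B n j = binom (n + j) n - binom (n + j) (n + 1)` for `j ≤ n`
(`ncard_boundedSeqs_add_choose`), and `B n n` is the Catalan number.
-/

/-- The nondecreasing sequences of length `n` with `1 ≤ b i ≤ i + 1` (zero-based index `i`) and
all entries at most `j + 1`. -/
def boundedSeqs (n j : ℕ) : Set (Fin n → ℕ) :=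
  {b | Monotone b ∧ ∀ i, 1 ≤ b i ∧ b i ≤ (i : ℕ) + 1 ∧ b i ≤ j + 1}

lemma boundedSeqs_finite (n j : ℕ) : (boundedSeqs n j).Finite := by
  refine (Set.Finite.pi' (fun _ : Fin n => Set.finite_Iic (j + 1))).subset ?_
  intro b hb i
  exact (hb.2 i).2.2

lemma ncard_boundedSeqs_zero_right (n : ℕ) : (boundedSeqs n 0).ncard = 1 := by
  rw [Set.ncard_eq_one]
  refine ⟨fun _ => 1, ?_⟩
  ext b
  simp only [boundedSeqs, Set.mem_ofPred_eq, Set.mem_singleton_iff]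
  constructor
  · rintro ⟨-, h⟩
    funext i
    have := h i
    omega
  · rintro rfl
    exact ⟨monotone_const, fun i => by simp⟩

lemma boundedSeqs_diag (n : ℕ) : boundedSeqs (n + 1) (n + 1) = boundedSeqs (n + 1) n := by
  ext b
  simp only [boundedSeqs, Set.mem_ofPred_eq]
  refine and_congr_right fun _ => forall_congr' fun i => ?_
  have := i.isLt
  omega

/-- Splitting according to whether the last entry attains the maximal allowed value `j + 2`. -/
lemma boundedSeqs_succ (n j : ℕ) (hj : j + 1 ≤ n) :
    boundedSeqs (n + 1) (j + 1) =
      boundedSeqs (n + 1) j ∪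
        (fun b : Fin n → ℕ => (Fin.snoc b (j + 2) : Fin (n + 1) → ℕ)) ''
          boundedSeqs n (j + 1) := by
  ext b
  simp only [boundedSeqs, Set.mem_union, Set.mem_image, Set.mem_ofPred_eq]
  constructor
  · rintro ⟨hm, hb⟩
    by_cases hl : b (Fin.last n) ≤ j + 1
    · exact Or.inl ⟨hm, fun i => ⟨(hb i).1, (hb i).2.1, (hm (Fin.le_last i)).trans hl⟩⟩
    · refine Or.inr ⟨Fin.init b, ⟨fun x y hxy => hm (Fin.castSucc_le_castSucc_iff.2 hxy),
        fun i => hb i.castSucc⟩, ?_⟩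
      have h1 := (hb (Fin.last n)).2.2
      have h2 : j + 2 = b (Fin.last n) := by omega
      rw [h2, Fin.snoc_init_self]
  · rintro (⟨hm, hb⟩ | ⟨c, ⟨hm, hc⟩, rfl⟩)
    · exact ⟨hm, fun i => ⟨(hb i).1, (hb i).2.1, (hb i).2.2.trans (by omega)⟩⟩
    · constructor
      · intro x y
        induction y using Fin.lastCases with
        | last =>
          induction x using Fin.lastCases with
          | last => simp
          | cast x => simpa using fun _ => (hc x).2.2
        | cast y =>
          induction x using Fin.lastCases with
          | last =>
            intro h
            exact absurd h (not_le.2 (Fin.castSucc_lt_last y))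
          | cast x =>
            intro h
            simpa using hm (Fin.castSucc_le_castSucc_iff.1 h)
      · intro i
        induction i using Fin.lastCases with
        | last => simpa using hj
        | cast i => simpa using hc i

lemma ncard_boundedSeqs_succ (n j : ℕ) (hj : j + 1 ≤ n) :
    (boundedSeqs (n + 1) (j + 1)).ncard =
      (boundedSeqs (n + 1) j).ncard + (boundedSeqs n (j + 1)).ncard := by
  rw [boundedSeqs_succ n j hj, Set.ncard_union_eq ?_ (boundedSeqs_finite _ _)
    ((boundedSeqs_finite _ _).image _), Set.ncard_image_of_injective]
  · intro b c h
    have := congrArg (Fin.init (α := fun _ => ℕ)) h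
    simpa using this
  · rw [Set.disjoint_left]
    rintro _ hb ⟨c, -, rfl⟩
    have := (hb.2 (Fin.last n)).2.2
    simp at this

/-- The ballot number formula, with the subtracted binomial coefficient moved to the left. -/
lemma ncard_boundedSeqs_add_choose (n j : ℕ) (hj : j ≤ n) :
    (boundedSeqs n j).ncard + (n + j).choose (n + 1) = (n + j).choose n := by
  induction n generalizing j with
  | zero =>
    obtain rfl : j = 0 := by omega
    simp [ncard_boundedSeqs_zero_right]
  | succ n ihn =>
    induction j with
    | zero => simp [ncard_boundedSeqs_zero_right]
    | succ j ihj =>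
      have h1 := ihj (by omega)
      have p1 := Nat.choose_succ_succ (n + j + 1) (n + 1)
      have p2 := Nat.choose_succ_succ (n + j + 1) n
      rw [show n + 1 + j = n + j + 1 by ring] at h1
      rw [show n + 1 + (j + 1) = n + j + 1 + 1 by ring]
      simp only [Nat.succ_eq_add_one] at p1 p2
      rcases Nat.lt_or_ge j n with h | h
      · have h2 := ihn (j + 1) h
        rw [← add_assoc] at h2
        rw [ncard_boundedSeqs_succ n j h]
        omega
      · obtain rfl : j = n := by omega
        -- The missing summand is consistent with the formula since it would contribute
        -- `binom (2n + 1) n - binom (2n + 1) (n + 1) = 0`.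
        have hs : (j + j + 1).choose (j + 1) = (j + j + 1).choose j :=
          Nat.choose_symm_of_eq_add (by omega)
        rw [boundedSeqs_diag]
        omega

/-- The number of nondecreasing sequences `(b₁, …, b_n)` with `1 ≤ bᵢ ≤ i`
for all `i = 1, …, n` is the `n`-th Catalan number `(1/(n+1)) * binomial (2n) n`.
(Here `b : Fin n → ℕ`, with `b i` the `(i+1)`-st entry, so the bound reads
`1 ≤ b i ≤ i + 1`.) -/
theorem card_nondecreasing_parking_eq_catalan (n : ℕ) (hn : 0 < n) :
    Nat.card {b : Fin n → ℕ // Monotone b ∧ ∀ i, 1 ≤ b i ∧ b i ≤ (i : ℕ) + 1} =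
      (2 * n).choose n / (n + 1) := by
  have hset : {b : Fin n → ℕ | Monotone b ∧ ∀ i, 1 ≤ b i ∧ b i ≤ (i : ℕ) + 1} =
      boundedSeqs n n := by
    ext b
    simp only [boundedSeqs, Set.mem_ofPred_eq]
    refine and_congr_right fun _ => forall_congr' fun i => ?_
    have := i.isLt
    omega
  change Set.ncard {b : Fin n → ℕ | Monotone b ∧ ∀ i, 1 ≤ b i ∧ b i ≤ (i : ℕ) + 1} = _
  rw [hset]
  have h := ncard_boundedSeqs_add_choose n n le_rfl
  have hc := Nat.choose_succ_right_eq (2 * n) n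
  rw [← two_mul] at h
  rw [show 2 * n - n = n by omega] at hc
  symm
  apply Nat.div_eq_of_eq_mul_left (Nat.succ_pos n)
  nlinarith
end

section
/- For every positive integer n, the number of multisets of cardinality n with elements in ℤ_{n+1} = ℤ/(n+1)ℤ whose elements sum to 0 equals the n-th Catalan number C_n = (1/(n+1))·binomial(2n, n). -/
/-!
Translating a multiset of cardinality `n` over `ℤ/(n+1)ℤ` by `c` changes its sum by `n * c = -c`.
Hence a multiset `m` of cardinality `n` with sum `s` is determined by `s` together with its
translate by `s`, which has sum `0`; every pair (zero-sum multiset, residue) arises in this way.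
All multisets of cardinality `n` are thus in bijection with `E(n) × ℤ/(n+1)ℤ`
(`symEquivZeroSumProd`), and there are `binomial (2n) n` of them by stars and bars.
-/

lemma sum_map_add_eq_sub (n : ℕ) (m : Multiset (ZMod (n + 1))) (hm : Multiset.card m = n)
    (c : ZMod (n + 1)) : (m.map (· + c)).sum = m.sum - c := by
  have h : (n : ZMod (n + 1)) + 1 = 0 := by exact_mod_cast ZMod.natCast_self (n + 1)
  rw [Multiset.sum_map_add, Multiset.map_id', Multiset.map_const', Multiset.sum_replicate, hm,
    nsmul_eq_mul]
  linear_combination c * h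

/-- A multiset `m` of cardinality `n` over `ℤ/(n+1)ℤ` corresponds to the pair consisting of its
translate by `m.sum`, which has sum zero, and the residue `m.sum`. -/
def symEquivZeroSumProd (n : ℕ) :
    Sym (ZMod (n + 1)) n ≃
      {m : Multiset (ZMod (n + 1)) // Multiset.card m = n ∧ m.sum = 0} × ZMod (n + 1) where
  toFun m := (⟨m.1.map (· + m.1.sum), by rw [Multiset.card_map, m.2],
    by rw [sum_map_add_eq_sub n m.1 m.2, sub_self]⟩, m.1.sum)
  invFun p := ⟨p.1.1.map (· + -p.2), by rw [Multiset.card_map, p.1.2.1]⟩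
  left_inv m := by
    apply Subtype.ext
    simp [Multiset.map_map]
  right_inv p := by
    obtain ⟨⟨m, hc, hs⟩, c⟩ := p
    have h : (m.map (· + -c)).sum = c := by
      rw [sum_map_add_eq_sub n m hc, hs, zero_sub, neg_neg]
    refine Prod.ext (Subtype.ext ?_) h
    change (m.map (· + -c)).map (· + (m.map (· + -c)).sum) = m
    rw [h]
    simp [Multiset.map_map]

/-- The number of multisets of cardinality `n` with elements in
`ℤ/(n+1)ℤ` whose elements sum to `0` is the `n`-th Catalan number
`(1/(n+1)) * binomial (2n) n`. -/
theorem card_multisets_sum_zero_eq_catalan (n : ℕ) (hn : 0 < n) :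
    Nat.card {m : Multiset (ZMod (n + 1)) // Multiset.card m = n ∧ m.sum = 0} =
      (2 * n).choose n / (n + 1) := by
  have h := Nat.card_congr (symEquivZeroSumProd n)
  rw [Nat.card_prod, Nat.card_zmod, Nat.card_eq_fintype_card, Sym.card_sym_eq_choose, ZMod.card,
    show n + 1 + n - 1 = 2 * n by omega] at h
  rw [h, Nat.mul_div_cancel _ n.succ_pos]
end

section
/- Let Γ be a finite abelian group, n ≥ 1, let G = Γ^n ⋊ S_n be the semidirect product (wreath product) where the symmetric group S_n acts on Γ^n by permuting coordinates, and let K be the subgroup of G consisting of all elements (d, σ) with d a constant tuple (d in the diagonal Δ ⊆ Γ^n) and σ ∈ S_n. Then for any two functions f₁, f₂ : G → ℂ satisfying f(k₁ x k₂) = f(x) for all k₁, k₂ ∈ K and x ∈ G, the convolutions agree: f₁ * f₂ = f₂ * f₁, where (f * h)(x) = Σ_{y ∈ G} f(y)·h(y⁻¹x). In other words, the Hecke algebra of the pair (G, K) is commutative, i.e. (G, K) is a Gelfand pair. -/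
/-!
Bi-invariance under `S_n` alone already forces commutativity. Write `F(a) = f(a, 1)`. Right
invariance gives `f(a, σ) = F(a)`, and left invariance makes `F` a symmetric function on `Γ^n`.
Hence `f (y⁻¹ x) = F(a⁻¹ c)` for `y = (a, σ)` and `x = (c, ρ)`, so that
`(f₁ * f₂)(x) = ∑_{(a, σ)} F₁(a) F₂(a⁻¹ c)`. Since `Γ^n` is abelian, the involution
`(a, σ) ↦ (c a⁻¹, σ)` of `G` exchanges the two factors.
-/

open SemidirectProduct

variable (n : ℕ) (Γ : Type*) [CommGroup Γ] [Fintype Γ]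

/-- The automorphism of `Γ^n` given by permuting coordinates:
`(σ • g) i = g (σ⁻¹ i)`. -/
def permAut (σ : Equiv.Perm (Fin n)) : MulAut (Fin n → Γ) where
  toFun g := fun i => g (σ⁻¹ i)
  invFun g := fun i => g (σ i)
  left_inv g := funext fun i => by simp
  right_inv g := funext fun i => by simp
  map_mul' g h := rfl

/-- The action of `S_n` on `Γ^n` by permuting coordinates, as a homomorphism
`S_n →* MulAut (Γ^n)`. -/
def permHom : Equiv.Perm (Fin n) →* MulAut (Fin n → Γ) where
  toFun := permAut n Γ
  map_one' := by
    ext g i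
    rfl
  map_mul' σ τ := by
    ext g i
    simp [permAut, Equiv.Perm.mul_apply]

instance : Fintype ((Fin n → Γ) ⋊[permHom n Γ] Equiv.Perm (Fin n)) :=
  Fintype.ofEquiv ((Fin n → Γ) × Equiv.Perm (Fin n))
    { toFun := fun p => ⟨p.1, p.2⟩
      invFun := fun x => (x.left, x.right)
      left_inv := fun _ => rfl
      right_inv := fun _ => rfl }

/-- A `K`-bi-invariant function takes on `y⁻¹ * x` a value depending only on
the quotient of the `Γ^n`-components of `y` and `x`. -/
lemma biinvariant_inv_mul {n : ℕ} {Γ : Type*} [CommGroup Γ]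
    {f : ((Fin n → Γ) ⋊[permHom n Γ] Equiv.Perm (Fin n)) → ℂ}
    (h : ∀ (d₁ d₂ : Γ) (σ₁ σ₂ : Equiv.Perm (Fin n))
        (x : (Fin n → Γ) ⋊[permHom n Γ] Equiv.Perm (Fin n)),
        f ((⟨fun _ => d₁, σ₁⟩ : (Fin n → Γ) ⋊[permHom n Γ] Equiv.Perm (Fin n)) * x *
          ⟨fun _ => d₂, σ₂⟩) = f x)
    (x y : (Fin n → Γ) ⋊[permHom n Γ] Equiv.Perm (Fin n)) (τ : Equiv.Perm (Fin n)) :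
    f (y⁻¹ * x) = f ⟨x.left * y.left⁻¹, τ⟩ := by
  -- `y⁻¹ * x = (1, σ⁻¹) * (c * a⁻¹, τ) * (1, τ⁻¹ * ρ)` for `y = (a, σ)` and `x = (c, ρ)`.
  rw [← h 1 1 y.right⁻¹ (τ⁻¹ * x.right) ⟨x.left * y.left⁻¹, τ⟩]
  congr 1
  have hone : (fun _ : Fin n => (1 : Γ)) = 1 := rfl
  ext1
  · simp [hone, mul_comm]
  · simp [mul_assoc]

/-- Let `Γ` be a finite abelian group, `G = Γ^n ⋊ S_n` the wreath product, and
`K ≤ G` the subgroup of elements `(d, σ)` with `d` a constant tuple. Then any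
two `K`-bi-invariant functions `G → ℂ` commute under convolution: the Hecke
algebra of `(G, K)` is commutative, i.e. `(G, K)` is a Gelfand pair. -/
theorem gelfand_pair_wreath_abelian (hn : 1 ≤ n)
    (f₁ f₂ : ((Fin n → Γ) ⋊[permHom n Γ] Equiv.Perm (Fin n)) → ℂ)
    (h₁ : ∀ (d₁ d₂ : Γ) (σ₁ σ₂ : Equiv.Perm (Fin n))
        (x : (Fin n → Γ) ⋊[permHom n Γ] Equiv.Perm (Fin n)),
        f₁ ((⟨fun _ => d₁, σ₁⟩ : (Fin n → Γ) ⋊[permHom n Γ] Equiv.Perm (Fin n)) * x *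
          ⟨fun _ => d₂, σ₂⟩) = f₁ x)
    (h₂ : ∀ (d₁ d₂ : Γ) (σ₁ σ₂ : Equiv.Perm (Fin n))
        (x : (Fin n → Γ) ⋊[permHom n Γ] Equiv.Perm (Fin n)),
        f₂ ((⟨fun _ => d₁, σ₁⟩ : (Fin n → Γ) ⋊[permHom n Γ] Equiv.Perm (Fin n)) * x *
          ⟨fun _ => d₂, σ₂⟩) = f₂ x) :
    ∀ x, ∑ y, f₁ y * f₂ (y⁻¹ * x) = ∑ y, f₂ y * f₁ (y⁻¹ * x) := by
  intro x
  -- `(a, σ) ↦ (c * a⁻¹, σ)`, where `c` is the `Γ^n`-component of `x`.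
  let φ : ((Fin n → Γ) ⋊[permHom n Γ] Equiv.Perm (Fin n)) →
      (Fin n → Γ) ⋊[permHom n Γ] Equiv.Perm (Fin n) := fun y => ⟨x.left * y.left⁻¹, y.right⟩
  have hφ : Function.Involutive φ := fun y => by
    ext1
    · simp [φ]
    · rfl
  refine Fintype.sum_equiv hφ.toPerm _ _ fun y => ?_
  have e₂ : f₂ (y⁻¹ * x) = f₂ (φ y) := biinvariant_inv_mul h₂ x y y.right
  have e₁ : f₁ ((φ y)⁻¹ * x) = f₁ y :=
    (biinvariant_inv_mul h₁ x (φ y) y.right).trans (congrArg f₁ (hφ y))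
  change f₁ y * f₂ (y⁻¹ * x) = f₂ (φ y) * f₁ ((φ y)⁻¹ * x)
  rw [e₁, e₂, mul_comm]
end

section
/- For every positive integer n, under the action of the symmetric group S_n on the set of parking functions of length n by permuting entries, every S_n-orbit contains exactly one nondecreasing parking function; consequently, the number of S_n-orbits on the set of parking functions of length n equals the n-th Catalan number C_n = (1/(n+1))·binomial(2n, n). -/
theorem IsParkingFunction.comp_perm {n : ℕ} {a : Fin n → ℕ} (h : IsParkingFunction n a)
    (σ : Equiv.Perm (Fin n)) : IsParkingFunction n (a ∘ σ) := by
  refine ⟨fun i => h.1 (σ i), fun j h1 h2 => (h.2 j h1 h2).trans (le_of_eq ?_)⟩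
  symm
  apply Finset.card_bij (fun i _ => σ i)
  · intro i hi
    simpa using hi
  · intro i _ k _ hik
    exact σ.injective hik
  · intro i hi
    exact ⟨σ.symm i, by simpa using hi, by simp⟩

theorem isParkingFunction_iff_of_monotone {n : ℕ} {b : Fin n → ℕ} (hb : Monotone b) :
    IsParkingFunction n b ↔ ∀ i, 1 ≤ b i ∧ b i ≤ i + 1 := by
  constructor
  · rintro ⟨h1, h2⟩ i
    refine ⟨(h1 i).1, ?_⟩
    by_contra! hlt
    have h := h2 (i + 1) (by omega) (by omega)
    -- If `b i > i + 1`, only the `i` indices before `i` can carry entries `≤ i + 1`.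
    have hsub : (Finset.univ.filter (fun k => b k ≤ (i : ℕ) + 1)) ⊆ Finset.Iio i := by
      intro k hk
      simp only [Finset.mem_filter, Finset.mem_univ, true_and] at hk
      rw [Finset.mem_Iio]
      by_contra! hik
      have := hb hik
      omega
    have hc := Finset.card_le_card hsub
    rw [Fin.card_Iio] at hc
    omega
  · intro h
    refine ⟨fun i => ⟨(h i).1, by have := (h i).2; omega⟩, fun j _ hj => ?_⟩
    have hsub : (Finset.univ.map (Fin.castLEEmb hj)) ⊆
        Finset.univ.filter (fun k => b k ≤ j) := by
      intro k hk
      obtain ⟨l, -, rfl⟩ := Finset.mem_map.1 hk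
      have := (h (Fin.castLEEmb hj l)).2
      simp only [Finset.mem_filter, Finset.mem_univ, true_and]
      simp only [Fin.castLEEmb_apply, Fin.val_castLE] at this ⊢
      omega
    simpa using Finset.card_le_card hsub

/-- Nondecreasing sequences of length `n` of positive integers whose entry at the zero-based index
`i` is at most `i + 1`, and whose entries are all at most `j + 1`. -/
def ballotSet (n j : ℕ) : Set (Fin n → ℕ) :=
  {b | Monotone b ∧ ∀ i, 1 ≤ b i ∧ b i ≤ i + 1 ∧ b i ≤ j + 1}

theorem ballotSet_finite (n j : ℕ) : (ballotSet n j).Finite :=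
  (Set.finite_Iic (fun _ : Fin n => j + 1)).subset fun _ hb i => (hb.2 i).2.2

theorem ballotSet_zero_left (j : ℕ) : (ballotSet 0 j).ncard = 1 := by
  have : ballotSet 0 j = {Fin.elim0} := by
    ext b
    simp only [ballotSet, Set.mem_ofPred_eq, Set.mem_singleton_iff]
    exact ⟨fun _ => Subsingleton.elim _ _, fun _ => ⟨fun i => i.elim0, fun i => i.elim0⟩⟩
  rw [this, Set.ncard_singleton]

theorem ballotSet_zero_right (n : ℕ) : (ballotSet n 0).ncard = 1 := by
  have : ballotSet n 0 = {fun _ => 1} := by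
    ext b
    simp only [ballotSet, Set.mem_ofPred_eq, Set.mem_singleton_iff]
    constructor
    · rintro ⟨-, h⟩
      funext i
      have := h i
      omega
    · rintro rfl
      exact ⟨monotone_const, fun i => by simp⟩
  rw [this, Set.ncard_singleton]

theorem ballotSet_diag (n : ℕ) : ballotSet (n + 1) (n + 1) = ballotSet (n + 1) n := by
  ext b
  simp only [ballotSet, Set.mem_ofPred_eq]
  refine and_congr_right fun _ => forall_congr' fun i => ?_
  omega

/-- The last entry of a member of `ballotSet (n + 1) (j + 1)` is either at most `j + 1`, or equal
to `j + 2`; in the latter case removing it leaves an arbitrary member of `ballotSet n (j + 1)`. -/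
theorem ballotSet_succ {n j : ℕ} (hj : j < n) :
    (ballotSet (n + 1) (j + 1)).ncard =
      (ballotSet (n + 1) j).ncard + (ballotSet n (j + 1)).ncard := by
  let f : (Fin n → ℕ) → (Fin (n + 1) → ℕ) := fun b => Fin.snoc (α := fun _ => ℕ) b (j + 2)
  have hf : Function.Injective f := by
    intro b c h
    funext i
    simpa [f] using congrFun h i.castSucc
  have hunion : ballotSet (n + 1) (j + 1) = ballotSet (n + 1) j ∪ f '' ballotSet n (j + 1) := by
    ext b
    constructor
    · rintro ⟨hm, h⟩
      by_cases hl : b (Fin.last n) ≤ j + 1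
      · left
        exact ⟨hm, fun i => ⟨(h i).1, (h i).2.1, (hm (Fin.le_last i)).trans hl⟩⟩
      · right
        refine ⟨fun i => b i.castSucc, ⟨fun i k hik => hm (by simpa using hik),
          fun i => by simpa using h i.castSucc⟩, ?_⟩
        funext i
        refine Fin.lastCases ?_ (fun i => ?_) i
        · have := h (Fin.last n)
          simp only [f, Fin.snoc_last]
          omega
        · simp [f]
    · rintro (⟨hm, h⟩ | ⟨c, ⟨hm, h⟩, rfl⟩)
      · exact ⟨hm, fun i => ⟨(h i).1, (h i).2.1, by have := (h i).2.2; omega⟩⟩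
      · constructor
        · intro i k
          refine Fin.lastCases ?_ (fun k => ?_) k
          · refine Fin.lastCases ?_ (fun i => ?_) i
            · intro _; rfl
            · intro _
              simpa [f] using (h i).2.2
          · refine Fin.lastCases ?_ (fun i => ?_) i
            · intro hle
              exact absurd hle (not_le.2 (Fin.castSucc_lt_last k))
            · intro hle
              simpa [f] using hm (by simpa using hle)
        · intro i
          refine Fin.lastCases ?_ (fun i => ?_) i
          · simp only [f, Fin.snoc_last, Fin.val_last]
            omega
          · simpa [f] using h i
  have hdisj : Disjoint (ballotSet (n + 1) j) (f '' ballotSet n (j + 1)) := by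
    rw [Set.disjoint_left]
    rintro _ ⟨-, h⟩ ⟨c, -, rfl⟩
    have := (h (Fin.last n)).2.2
    simp only [f, Fin.snoc_last] at this
    omega
  rw [hunion, Set.ncard_union_eq hdisj (ballotSet_finite _ _) ((ballotSet_finite _ _).image f),
    Set.ncard_image_of_injective _ hf]

/-- The ballot numbers, written with `n = j + d` to avoid truncated subtraction. -/
theorem ballotSet_ncard (j d : ℕ) :
    (j + d + 1) * (ballotSet (j + d) j).ncard = (d + 1) * (j + d + j).choose j := by
  induction j generalizing d with
  | zero => simp [ballotSet_zero_right]
  | succ j ihj =>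
    induction d with
    | zero =>
      have h := ihj 1
      rw [add_zero, ballotSet_diag]
      -- `binomial (2j+2) (j+1) = 2 * binomial (2j+1) j` by Pascal and symmetry.
      have h2 : (j + 1 + (j + 1)).choose (j + 1) = 2 * (j + 1 + j).choose j := by
        have hs : (j + 1 + j).choose (j + 1) = (j + 1 + j).choose j :=
          Nat.choose_symm_add
        rw [← add_assoc, Nat.choose_succ_succ, hs]
        ring
      rw [h2, h]
      ring
    | succ d ihd =>
      have h1 := ihj (d + 2)
      have hrec := ballotSet_succ (n := j + 1 + d) (j := j) (by omega)
      rw [show j + 1 + (d + 1) = j + 1 + d + 1 by ring, hrec]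
      rw [show j + (d + 2) = j + 1 + d + 1 by ring] at h1
      -- With `m = 2j + d + 2`, both binomials are expressed through `binomial m j`.
      have e1 : j + 1 + d + 1 + j = j + 1 + d + (j + 1) := by ring
      have e2 : j + 1 + d + 1 + (j + 1) = j + 1 + d + (j + 1) + 1 := by ring
      rw [e1] at h1
      rw [e2, Nat.choose_succ_succ]
      have hc := Nat.choose_succ_right_eq (j + 1 + d + (j + 1)) j
      rw [show j + 1 + d + (j + 1) - j = j + d + 2 by omega] at hc
      generalize (j + 1 + d + (j + 1)).choose j = x at *
      generalize (j + 1 + d + (j + 1)).choose (j + 1) = y at *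
      generalize (ballotSet (j + 1 + d + 1) j).ncard = p at *
      generalize (ballotSet (j + 1 + d) (j + 1)).ncard = q at *
      have hpos : (0 : ℤ) < j + d + 2 := by positivity
      zify at *
      apply mul_left_cancel₀ hpos.ne'
      linear_combination (j + d + 2 : ℤ) * h1 + (j + d + 3 : ℤ) * ihd - hc

theorem ballotSet_self_ncard (n : ℕ) :
    (ballotSet n n).ncard = (2 * n).choose n / (n + 1) := by
  have h := ballotSet_ncard n 0
  rw [add_zero, zero_add, one_mul, ← two_mul] at h
  rw [← h, Nat.mul_div_cancel_left _ n.succ_pos]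

theorem monotone_parking_iff_mem_ballotSet {n : ℕ} {b : Fin n → ℕ} :
    IsParkingFunction n b ∧ Monotone b ↔ b ∈ ballotSet n n := by
  constructor
  · rintro ⟨hp, hm⟩
    rw [isParkingFunction_iff_of_monotone hm] at hp
    exact ⟨hm, fun i => ⟨(hp i).1, (hp i).2, by have := (hp i).2; omega⟩⟩
  · rintro ⟨hm, h⟩
    exact ⟨(isParkingFunction_iff_of_monotone hm).2 fun i => ⟨(h i).1, (h i).2.1⟩, hm⟩

/-- Under the `S_n`-action `(σ • a) i = a (σ⁻¹ i)` on parking functions of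
length `n`, every orbit contains exactly one nondecreasing parking function;
consequently the number of orbits is the `n`-th Catalan number
`(1/(n+1)) * binomial (2n) n`. -/
theorem parking_orbits (n : ℕ) (hn : 0 < n) :
    (∀ a : Fin n → ℕ, IsParkingFunction n a →
      ∃! b : Fin n → ℕ, IsParkingFunction n b ∧ Monotone b ∧
        ∃ σ : Equiv.Perm (Fin n), b = fun i => a (σ⁻¹ i)) ∧
    Nat.card
        (Quot fun a b : {a : Fin n → ℕ // IsParkingFunction n a} =>
          ∃ σ : Equiv.Perm (Fin n), (fun i => a.1 (σ⁻¹ i)) = b.1) =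
      (2 * n).choose n / (n + 1) := by
  constructor
  · intro a ha
    refine ⟨a ∘ Tuple.sort a, ⟨ha.comp_perm _, Tuple.monotone_sort a, (Tuple.sort a)⁻¹, ?_⟩, ?_⟩
    · rw [inv_inv]
      rfl
    · rintro b ⟨-, hm, σ, rfl⟩
      exact Tuple.unique_monotone (σ := σ⁻¹) (τ := Tuple.sort a) hm (Tuple.monotone_sort a)
  · rw [← ballotSet_self_ncard n, ← Nat.card_coe_set_eq]
    symm
    -- Each nondecreasing parking function is sent to its orbit.
    refine Nat.card_eq_of_bijective (fun b : ballotSet n n =>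
      Quot.mk _ ⟨b.1, (monotone_parking_iff_mem_ballotSet.2 b.2).1⟩) ⟨?_, ?_⟩
    · intro b c hbc
      -- The sorted rearrangement is an orbit invariant, and fixes nondecreasing sequences.
      have h := congrArg (Quot.lift (fun a : {a : Fin n → ℕ // IsParkingFunction n a} =>
        a.1 ∘ Tuple.sort a.1) (by
          rintro a c ⟨σ, hσ⟩
          have hm := Tuple.monotone_sort c.1
          have hcs : c.1 ∘ Tuple.sort c.1 = a.1 ∘ ⇑(σ⁻¹ * Tuple.sort c.1) := by
            rw [← hσ]
            rfl
          rw [hcs] at hm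
          show a.1 ∘ Tuple.sort a.1 = c.1 ∘ Tuple.sort c.1
          rw [hcs]
          exact Tuple.unique_monotone (Tuple.monotone_sort a.1) hm)) hbc
      have hs : ∀ d : ballotSet n n, d.1 ∘ Tuple.sort d.1 = d.1 := fun d =>
        Tuple.unique_monotone (τ := Equiv.refl _) (Tuple.monotone_sort d.1) d.2.1
      change b.1 ∘ Tuple.sort b.1 = c.1 ∘ Tuple.sort c.1 at h
      rw [hs, hs] at h
      exact Subtype.ext h
    · rintro ⟨a, ha⟩
      refine ⟨⟨a ∘ Tuple.sort a, monotone_parking_iff_mem_ballotSet.1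
        ⟨ha.comp_perm _, Tuple.monotone_sort a⟩⟩, ?_⟩
      refine (Quot.sound ⟨(Tuple.sort a)⁻¹, ?_⟩).symm
      rw [inv_inv]
      rfl
end
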